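/- arXiv:2208.00103 — 6 statements merged into one kernel-verified Lean document; each statement's English description precedes it below -/
import Mathlib

section
/- Let h be a real number and θ a complex number with |θ| < h. Set s := √(h² − |θ|²) and z₊ := −θ / (h + s). Then |z₊| < 1, and the function f(z) := ( h·|z|² + Re( conj(θ) · z ) ) / ( 1 − |z|² ), defined for complex z with |z| < 1, satisfies: (i) f(z) ≥ −(h − s)/2 for every z with |z| < 1; (ii) f(z₊) = −(h − s)/2; and (iii) if |z| < 1 and z ≠ z₊ then f(z) > −(h − s)/2. -/
open scoped ComplexConjugate

/-- Single-mode minimization of the pair-excitation energy: for `|θ| < h`,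
with `s = √(h² − |θ|²)` and `z₊ = −θ/(h+s)`, one has `|z₊| < 1` and the function
`f(z) = (h|z|² + Re(θ̄ z))/(1 − |z|²)` on the open unit disc attains its strict global
minimum `−(h−s)/2` exactly at `z₊`. -/
theorem stmt5
    (h : ℝ) (θ : ℂ) (hθ : ‖θ‖ < h)
    (s : ℝ) (hs : s = Real.sqrt (h ^ 2 - ‖θ‖ ^ 2))
    (zp : ℂ) (hzp : zp = -θ / (h + s : ℂ))
    (f : ℂ → ℝ)
    (hf : ∀ z, f z = (h * ‖z‖ ^ 2 + (conj θ * z).re) / (1 - ‖z‖ ^ 2)) :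
    ‖zp‖ < 1 ∧
    (∀ z : ℂ, ‖z‖ < 1 → -(h - s) / 2 ≤ f z) ∧
    f zp = -(h - s) / 2 ∧
    (∀ z : ℂ, ‖z‖ < 1 → z ≠ zp → -(h - s) / 2 < f z) := by
  have hn := norm_nonneg θ
  have hpos : 0 < h ^ 2 - ‖θ‖ ^ 2 := by nlinarith
  have hs0 : 0 < s := by rw [hs]; exact Real.sqrt_pos.mpr hpos
  have hs2 : s ^ 2 = h ^ 2 - ‖θ‖ ^ 2 := by rw [hs]; exact Real.sq_sqrt hpos.le
  have hk : 0 < h + s := by linarith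
  have hθz : θ = -(((h + s : ℝ) : ℂ) * zp) := by
    have hne : (h + s : ℂ) ≠ 0 := by exact_mod_cast hk.ne'
    rw [hzp]
    push_cast
    field_simp
  have hnθ : ‖θ‖ = (h + s) * ‖zp‖ := by
    rw [hθz, norm_neg, norm_mul, Complex.norm_real, Real.norm_of_nonneg hk.le]
  have hN : (h + s) * ‖zp‖ ^ 2 = h - s := by
    apply mul_left_cancel₀ hk.ne'
    rw [hnθ] at hs2
    linarith
  have hzp1 : ‖zp‖ < 1 := by
    have h1 : (h + s) * ‖zp‖ < (h + s) * 1 := by rw [← hnθ]; linarith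
    exact lt_of_mul_lt_mul_left h1 hk.le
  have key : ∀ z : ℂ, ‖z‖ < 1 →
      f z = -(h - s) / 2 + (h + s) / 2 * ‖z - zp‖ ^ 2 / (1 - ‖z‖ ^ 2) := by
    intro z hz
    have hd : 0 < 1 - ‖z‖ ^ 2 := by nlinarith [norm_nonneg z]
    have e : h * ‖z‖ ^ 2 + (conj θ * z).re
        = -(h - s) / 2 * (1 - ‖z‖ ^ 2) + (h + s) / 2 * ‖z - zp‖ ^ 2 := by
      have e1 : (conj θ * z).re = -((h + s) * (zp.re * z.re + zp.im * z.im)) := by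
        rw [hθz]
        simp
        ring
      have e2 : ‖z - zp‖ ^ 2 = ‖z‖ ^ 2 + ‖zp‖ ^ 2 - 2 * (zp.re * z.re + zp.im * z.im) := by
        simp only [← Complex.normSq_eq_norm_sq, Complex.normSq_apply, Complex.sub_re,
          Complex.sub_im]
        ring
      rw [e1, e2]
      linear_combination (-1 / 2) * hN
    rw [hf, e, add_div, mul_div_cancel_right₀ _ hd.ne']
  refine ⟨hzp1, ?_, ?_, ?_⟩
  · intro z hz
    have hd : 0 < 1 - ‖z‖ ^ 2 := by nlinarith [norm_nonneg z]
    rw [key z hz]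
    have : 0 ≤ (h + s) / 2 * ‖z - zp‖ ^ 2 / (1 - ‖z‖ ^ 2) := by positivity
    linarith
  · rw [key zp hzp1]
    simp
  · intro z hz hne
    have hd : 0 < 1 - ‖z‖ ^ 2 := by nlinarith [norm_nonneg z]
    have hnz : 0 < ‖z - zp‖ := norm_pos_iff.mpr (sub_ne_zero.mpr hne)
    rw [key z hz]
    have : 0 < (h + s) / 2 * ‖z - zp‖ ^ 2 / (1 - ‖z‖ ^ 2) := by positivity
    linarith
end

section
/- Let h be a real number, θ a complex number and c > 0 with h − |θ| ≥ c. Set s := √(h² − |θ|²) and z₊ := −θ / (h + s). Then |z₊| < 1 and |z₊| / (1 − |z₊|²) = |θ| / (2s) ≤ |θ| / (2c). -/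
/-- Under the gap condition `h − |θ| ≥ c > 0`, the minimizing coefficient
`z₊ = −θ/(h+s)` with `s = √(h² − |θ|²)` satisfies `|z₊| < 1` and
`|z₊|/(1 − |z₊|²) = |θ|/(2s) ≤ |θ|/(2c)`. -/
theorem stmt6
    (h : ℝ) (θ : ℂ) (c : ℝ) (hc : 0 < c) (hgap : c ≤ h - ‖θ‖)
    (s : ℝ) (hs : s = Real.sqrt (h ^ 2 - ‖θ‖ ^ 2))
    (zp : ℂ) (hzp : zp = -θ / (h + s : ℂ)) :
    ‖zp‖ < 1 ∧
    ‖zp‖ / (1 - ‖zp‖ ^ 2) = ‖θ‖ / (2 * s) ∧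
    ‖θ‖ / (2 * s) ≤ ‖θ‖ / (2 * c) := by
  have ht : 0 ≤ ‖θ‖ := norm_nonneg θ
  have hge : c ^ 2 ≤ h ^ 2 - ‖θ‖ ^ 2 := by nlinarith
  have hcs : c ≤ s := by
    rw [hs]
    exact Real.le_sqrt_of_sq_le hge
  have hs2 : s ^ 2 = h ^ 2 - ‖θ‖ ^ 2 := by
    rw [hs]
    exact Real.sq_sqrt (le_trans (sq_nonneg c) hge)
  have hspos : 0 < s := lt_of_lt_of_le hc hcs
  have hsum : 0 < h + s := by linarith
  have hn : ‖zp‖ = ‖θ‖ / (h + s) := by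
    rw [hzp, norm_div, norm_neg, ← Complex.ofReal_add, Complex.norm_real,
      Real.norm_of_nonneg hsum.le]
  have hden : 1 - (‖θ‖ / (h + s)) ^ 2 = 2 * s / (h + s) := by
    field_simp
    nlinarith
  refine ⟨?_, ?_, ?_⟩
  · rw [hn, div_lt_one hsum]
    linarith
  · rw [hn, hden]
    field_simp
  · gcongr
end

section
/- Let H be a complex Hilbert space, T : H → H a bounded self-adjoint operator, and A : H → H a bounded operator with ‖A‖ ≤ a for some a ≥ 0. Suppose α and β are real numbers with α, β ∈ spectrum(T), the spectrum of T contains no point z with α < Re z < β, and 2a < β − α. Then for every s ∈ [0,1], the spectrum of T + s·A contains no point z ∈ ℂ with α + a < Re z < β − a. -/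
/-- Cuenin–Tretter spectral gap stability. If a bounded self-adjoint
operator `T` on a complex Hilbert space has a spectral gap: `α, β ∈ spectrum(T)` and no
spectral point has real part in `(α, β)`, and `A` is a bounded perturbation with `‖A‖ ≤ a`
and `2a < β − α`, then for every `s ∈ [0,1]` the spectrum of `T + sA` contains no point
with real part in `(α + a, β − a)`. -/
theorem stmt7
    {H : Type*} [NormedAddCommGroup H] [InnerProductSpace ℂ H] [CompleteSpace H]
    (T A : H →L[ℂ] H) (hT : IsSelfAdjoint T)
    (a : ℝ) (ha : 0 ≤ a) (hA : ‖A‖ ≤ a)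
    (α β : ℝ)
    (hα : (α : ℂ) ∈ spectrum ℂ T) (hβ : (β : ℂ) ∈ spectrum ℂ T)
    (hgapT : ∀ z ∈ spectrum ℂ T, ¬(α < z.re ∧ z.re < β))
    (hgap : 2 * a < β - α) :
    ∀ s : ℝ, s ∈ Set.Icc (0 : ℝ) 1 →
      ∀ z ∈ spectrum ℂ (T + (s : ℂ) • A), ¬(α + a < z.re ∧ z.re < β - a) := by
  intro s hs z hz ⟨h1, h2⟩
  have hN : IsStarNormal T := hT.isStarNormal
  obtain ⟨d, had, hd1, hd2⟩ : ∃ d : ℝ, a < d ∧ d ≤ z.re - α ∧ d ≤ β - z.re :=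
    ⟨min (z.re - α) (β - z.re), lt_min (by linarith) (by linarith),
      min_le_left _ _, min_le_right _ _⟩
  have hd : 0 < d := lt_of_le_of_lt ha had
  have hdist : ∀ w ∈ spectrum ℂ T, d ≤ ‖z - w‖ := by
    intro w hw
    have h := hgapT w hw
    have h3 : |(z - w).re| ≤ ‖z - w‖ := Complex.abs_re_le_norm _
    refine le_trans ?_ h3
    rw [Complex.sub_re]
    by_cases hc : α < w.re
    · have : β ≤ w.re := by
        by_contra hh
        exact h ⟨hc, not_le.mp hh⟩
      have := neg_abs_le (z.re - w.re)
      linarith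
    · have := le_abs_self (z.re - w.re)
      linarith
  have hne : ∀ w ∈ spectrum ℂ T, z - w ≠ 0 := fun w hw h0 => by
    have := hdist w hw
    rw [h0, norm_zero] at this
    linarith
  have hcont : ContinuousOn (fun w : ℂ => (z - w)⁻¹) (spectrum ℂ T) :=
    ContinuousOn.inv₀ (by fun_prop) hne
  have hlin : cfc (fun w : ℂ => z - w) T = algebraMap ℂ (H →L[ℂ] H) z - T := by
    rw [cfc_sub (fun _ : ℂ => z) (fun w : ℂ => w) T, cfc_const z T, cfc_id' ℂ T]
  set R : H →L[ℂ] H := cfc (fun w : ℂ => (z - w)⁻¹) T with hR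
  have hRnorm : ‖R‖ ≤ d⁻¹ := by
    refine norm_cfc_le (by positivity) fun w hw => ?_
    rw [norm_inv]
    exact inv_anti₀ hd (hdist w hw)
  have hmul : (algebraMap ℂ (H →L[ℂ] H) z - T) * R = 1 := by
    rw [← hlin, hR, ← cfc_mul (fun w : ℂ => z - w) (fun w : ℂ => (z - w)⁻¹) T (by fun_prop) hcont,
      ← cfc_const_one ℂ T]
    exact cfc_congr fun w hw => mul_inv_cancel₀ (hne w hw)
  have hmul' : R * (algebraMap ℂ (H →L[ℂ] H) z - T) = 1 := by
    rw [← hlin, hR, ← cfc_mul (fun w : ℂ => (z - w)⁻¹) (fun w : ℂ => z - w) T hcont (by fun_prop),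
      ← cfc_const_one ℂ T]
    exact cfc_congr fun w hw => inv_mul_cancel₀ (hne w hw)
  have hU : IsUnit (algebraMap ℂ (H →L[ℂ] H) z - T) := ⟨⟨_, R, hmul, hmul'⟩, rfl⟩
  have hsA : ‖(s : ℂ) • A‖ ≤ a := by
    rw [norm_smul, Complex.norm_real, Real.norm_eq_abs, abs_of_nonneg hs.1]
    nlinarith [norm_nonneg A, hs.1, hs.2]
  have hlt : ‖R * ((s : ℂ) • A)‖ < 1 := by
    calc ‖R * ((s : ℂ) • A)‖ ≤ ‖R‖ * ‖(s : ℂ) • A‖ := norm_mul_le _ _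
      _ ≤ d⁻¹ * a := by gcongr
      _ < 1 := by rw [inv_mul_lt_one₀ hd]; exact had
  have hU2 := hU.mul (isUnit_one_sub_of_norm_lt_one hlt)
  rw [mul_sub, mul_one, ← mul_assoc, hmul, one_mul, sub_sub] at hU2
  exact hz hU2
end

section
/- Let H be a complex Hilbert space with a Hilbert basis (η_i)_{i ∈ ι}, and let k : H → H be a bounded operator with ‖k‖ < 1. Then 1 − k k* is a positive invertible operator; let T denote the positive square root of (1 − k k*)⁻¹, and define u_i := T η_i and p_i := k* u_i. Then for all i, j ∈ ι: ⟪u_i, u_j⟫ − ⟪p_i, p_j⟫ = 1 if i = j, and ⟪u_i, u_j⟫ − ⟪p_i, p_j⟫ = 0 if i ≠ j. -/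
open scoped InnerProductSpace

/-- Bogoliubov normalization relations. Let `(η i)` be a Hilbert basis of a
complex Hilbert space `H` and `k` a bounded operator with `‖k‖ < 1`. Then `1 − k k*` is
positive and invertible, and for `T` the positive square root of `(1 − k k*)⁻¹`,
`u i := T (η i)` and `p i := k* (u i)`, one has
`⟪u i, u j⟫ − ⟪p i, p j⟫ = δ_{ij}`. -/
theorem stmt9
    {H : Type*} [NormedAddCommGroup H] [InnerProductSpace ℂ H] [CompleteSpace H]
    {ι : Type*} [DecidableEq ι] (η : HilbertBasis ι ℂ H)
    (k : H →L[ℂ] H) (hk : ‖k‖ < 1) :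
    ((1 - k ∘L ContinuousLinearMap.adjoint k).IsPositive ∧
      IsUnit (1 - k ∘L ContinuousLinearMap.adjoint k)) ∧
    ∀ T : H →L[ℂ] H, T.IsPositive →
      T ∘L T = Ring.inverse (1 - k ∘L ContinuousLinearMap.adjoint k) →
      ∀ i j : ι,
        ⟪T (η i), T (η j)⟫_ℂ -
            ⟪(ContinuousLinearMap.adjoint k) (T (η i)),
              (ContinuousLinearMap.adjoint k) (T (η j))⟫_ℂ =
          if i = j then 1 else 0 := by
  have hn : ‖ContinuousLinearMap.adjoint k‖ < 1 := by
    rwa [LinearIsometryEquiv.norm_map]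
  have hlt : ‖k ∘L ContinuousLinearMap.adjoint k‖ < 1 := by
    have h1 := ContinuousLinearMap.opNorm_comp_le k (ContinuousLinearMap.adjoint k)
    have h2 := norm_nonneg k
    have h3 := norm_nonneg (ContinuousLinearMap.adjoint k)
    nlinarith
  have hu : IsUnit (1 - k ∘L ContinuousLinearMap.adjoint k) :=
    isUnit_one_sub_of_norm_lt_one hlt
  have key : ∀ x y : H, ⟪x, (1 - k ∘L ContinuousLinearMap.adjoint k) y⟫_ℂ =
      ⟪x, y⟫_ℂ - ⟪(ContinuousLinearMap.adjoint k) x, (ContinuousLinearMap.adjoint k) y⟫_ℂ := by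
    intro x y
    rw [ContinuousLinearMap.adjoint_inner_left]
    simp [inner_sub_right]
  have key' : ∀ x y : H, ⟪(1 - k ∘L ContinuousLinearMap.adjoint k) x, y⟫_ℂ =
      ⟪x, y⟫_ℂ - ⟪(ContinuousLinearMap.adjoint k) x, (ContinuousLinearMap.adjoint k) y⟫_ℂ := by
    intro x y
    rw [ContinuousLinearMap.adjoint_inner_right]
    simp [inner_sub_left]
  refine ⟨⟨⟨?_, ?_⟩, hu⟩, ?_⟩
  · intro x y
    exact (key' x y).trans (key x y).symm
  · intro x
    have h1 : ‖(ContinuousLinearMap.adjoint k) x‖ ≤ ‖x‖ := by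
      have h2 := (ContinuousLinearMap.adjoint k).le_opNorm x
      have h3 := norm_nonneg x
      nlinarith
    have h4 := norm_nonneg ((ContinuousLinearMap.adjoint k) x)
    rw [ContinuousLinearMap.reApplyInnerSelf_apply, key', map_sub,
      inner_self_eq_norm_sq, inner_self_eq_norm_sq]
    nlinarith
  · intro T hT hTT i j
    rw [← key]
    generalize 1 - k ∘L ContinuousLinearMap.adjoint k = A at *
    have e1 : T * (T * A) = 1 := by
      rw [← mul_assoc]
      exact (congrArg (· * A) hTT).trans (Ring.inverse_mul_cancel A hu)
    have e2 : (A * T) * T = 1 := by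
      rw [mul_assoc]
      exact (congrArg (A * ·) hTT).trans (Ring.mul_inverse_cancel A hu)
    have e3 : A * T = T * A := left_inv_eq_right_inv e2 e1
    have e4 : T (A (T (η j))) = η j := by
      rw [← e3] at e1
      exact congrArg (fun B : H →L[ℂ] H => B (η j)) e1
    have e5 : ⟪T (η i), A (T (η j))⟫_ℂ = ⟪η i, T (A (T (η j)))⟫_ℂ := hT.1 _ _
    rw [e5, e4]
    exact orthonormal_iff_ite.mp η.orthonormal i j
end

section
/- Let H be a complex Hilbert space with a Hilbert basis (η_i)_{i ∈ ι}, and let k : H → H be a bounded operator with ‖k‖ < 1. Let T denote the positive square root of the positive invertible operator (1 − k k*)⁻¹, and define u_i := T η_i and p_i := k* u_i. Then for all f, g ∈ H: (i) ∑_{i ∈ ι} ⟪f, u_i⟫ · ⟪p_i, g⟫ = ⟪f, k (1 − k*k)⁻¹ g⟫, and (ii) ∑_{i ∈ ι} ⟪f, p_i⟫ · ⟪p_i, g⟫ = ⟪f, k*k (1 − k*k)⁻¹ g⟫, where both sums converge unconditionally (as tsum over ι). -/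
open scoped InnerProductSpace

/-- pair-correlation formulas. With `(η i)` a Hilbert basis, `‖k‖ < 1`,
`T` the positive square root of `(1 − k k*)⁻¹`, `u i := T (η i)` and `p i := k* (u i)`,
the sums `∑ ⟪f, u i⟫ ⟪p i, g⟫` and `∑ ⟪f, p i⟫ ⟪p i, g⟫` converge unconditionally to
`⟪f, k (1 − k*k)⁻¹ g⟫` and `⟪f, k*k (1 − k*k)⁻¹ g⟫` respectively. -/
theorem stmt10
    {H : Type*} [NormedAddCommGroup H] [InnerProductSpace ℂ H] [CompleteSpace H]
    {ι : Type*} (η : HilbertBasis ι ℂ H)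
    (k : H →L[ℂ] H) (hk : ‖k‖ < 1)
    (T : H →L[ℂ] H) (hT : T.IsPositive)
    (hT2 : T ∘L T = Ring.inverse (1 - k ∘L ContinuousLinearMap.adjoint k))
    (u p : ι → H)
    (hu : ∀ i, u i = T (η i))
    (hp : ∀ i, p i = (ContinuousLinearMap.adjoint k) (u i)) :
    ∀ f g : H,
      HasSum (fun i : ι => ⟪f, u i⟫_ℂ * ⟪p i, g⟫_ℂ)
        ⟪f, (k ∘L Ring.inverse (1 - ContinuousLinearMap.adjoint k ∘L k)) g⟫_ℂ ∧
      HasSum (fun i : ι => ⟪f, p i⟫_ℂ * ⟪p i, g⟫_ℂ)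
        ⟪f, ((ContinuousLinearMap.adjoint k ∘L k) ∘L
          Ring.inverse (1 - ContinuousLinearMap.adjoint k ∘L k)) g⟫_ℂ := by
  have hadj : ‖ContinuousLinearMap.adjoint k‖ = ‖k‖ :=
    LinearIsometryEquiv.norm_map ContinuousLinearMap.adjoint k
  have hlt : ‖k‖ * ‖k‖ < 1 := by nlinarith [norm_nonneg k]
  have h1 : IsUnit (1 - k * ContinuousLinearMap.adjoint k) := by
    refine (Units.oneSub _ (lt_of_le_of_lt (norm_mul_le _ _) ?_)).isUnit
    rwa [hadj]
  have h2 : IsUnit (1 - ContinuousLinearMap.adjoint k * k) := by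
    refine (Units.oneSub _ (lt_of_le_of_lt (norm_mul_le _ _) ?_)).isUnit
    rwa [hadj]
  have hTT : T * T * k = k * Ring.inverse (1 - ContinuousLinearMap.adjoint k * k) := by
    have e : T * T = Ring.inverse (1 - k * ContinuousLinearMap.adjoint k) := hT2
    have c : k * (1 - ContinuousLinearMap.adjoint k * k)
        = (1 - k * ContinuousLinearMap.adjoint k) * k := by noncomm_ring
    calc T * T * k
        = Ring.inverse (1 - k * ContinuousLinearMap.adjoint k) *
          (k * (1 - ContinuousLinearMap.adjoint k * k)) *
            Ring.inverse (1 - ContinuousLinearMap.adjoint k * k) := by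
          rw [e, mul_assoc, mul_assoc k, Ring.mul_inverse_cancel _ h2, mul_one]
      _ = _ := by rw [c, Ring.inverse_mul_cancel_left _ _ h1]
  have hTs : ∀ x y : H, ⟪T x, y⟫_ℂ = ⟪x, T y⟫_ℂ := fun x y => hT.isSymmetric x y
  have hTTg : ∀ g : H, T (T (k g))
      = k (Ring.inverse (1 - ContinuousLinearMap.adjoint k * k) g) :=
    fun g => DFunLike.congr_fun hTT g
  intro f g
  constructor
  · have h := η.hasSum_inner_mul_inner (T f) (T (k g))
    rw [hTs, hTTg] at h
    refine Eq.mp (congrArg (fun F : ι → ℂ => HasSum F _) (funext fun i => ?_)) h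
    symm
    rw [hp, hu, ContinuousLinearMap.adjoint_inner_left, hTs, hTs]
  · have h := η.hasSum_inner_mul_inner (T (k f)) (T (k g))
    rw [hTs, hTTg, ← ContinuousLinearMap.adjoint_inner_right] at h
    refine Eq.mp (congrArg (fun F : ι → ℂ => HasSum F _) (funext fun i => ?_)) h
    symm
    rw [hp, hu, ContinuousLinearMap.adjoint_inner_left,
      ContinuousLinearMap.adjoint_inner_right, hTs, hTs]
end

section
/- Let R be a unital (not necessarily commutative) ring and let h₁, h₂, t₁, t₂, k₁, k₂ ∈ R satisfy the pair of Riccati equations h₁ k₁ + k₁ h₂ + t₁ + k₁ t₂ k₁ = 0 and h₂ k₂ + k₂ h₁ + t₂ + k₂ t₁ k₂ = 0. Define the 2×2 block matrices over R: W := [[1, k₁], [k₂, 1]], M := [[h₁, −t₁], [t₂, −h₂]], and D := [[h₁ + k₁ t₂, 0], [0, −(h₂ + k₂ t₁)]]. Then W · M = D · W. In particular, if W is invertible then W M W⁻¹ equals the block-diagonal matrix D. -/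
/-- algebraic core of the Bogoliubov diagonalization. In any unital ring,
if `h₁ k₁ + k₁ h₂ + t₁ + k₁ t₂ k₁ = 0` and `h₂ k₂ + k₂ h₁ + t₂ + k₂ t₁ k₂ = 0`, then with
`W = [[1, k₁], [k₂, 1]]`, `M = [[h₁, −t₁], [t₂, −h₂]]` and
`D = [[h₁ + k₁ t₂, 0], [0, −(h₂ + k₂ t₁)]]` one has `W M = D W`; in particular if `W` has a
two-sided inverse `Winv` then `W M Winv = D`. -/
theorem stmt13
    {R : Type*} [Ring R] (h₁ h₂ t₁ t₂ k₁ k₂ : R)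
    (hric1 : h₁ * k₁ + k₁ * h₂ + t₁ + k₁ * t₂ * k₁ = 0)
    (hric2 : h₂ * k₂ + k₂ * h₁ + t₂ + k₂ * t₁ * k₂ = 0) :
    (!![1, k₁; k₂, 1] : Matrix (Fin 2) (Fin 2) R) * !![h₁, -t₁; t₂, -h₂] =
        !![h₁ + k₁ * t₂, 0; 0, -(h₂ + k₂ * t₁)] * !![1, k₁; k₂, 1] ∧
    ∀ Winv : Matrix (Fin 2) (Fin 2) R,
      (!![1, k₁; k₂, 1] : Matrix (Fin 2) (Fin 2) R) * Winv = 1 →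
      Winv * !![1, k₁; k₂, 1] = 1 →
      (!![1, k₁; k₂, 1] : Matrix (Fin 2) (Fin 2) R) * !![h₁, -t₁; t₂, -h₂] * Winv =
        !![h₁ + k₁ * t₂, 0; 0, -(h₂ + k₂ * t₁)] := by
  have e12 : -t₁ + -(k₁ * h₂) = (h₁ + k₁ * t₂) * k₁ := by
    rw [← sub_eq_zero, ← neg_eq_zero, ← hric1]
    noncomm_ring
  have e21 : k₂ * h₁ + t₂ = -((h₂ + k₂ * t₁) * k₂) := by
    rw [← sub_eq_zero, ← hric2]
    noncomm_ring
  have e22 : -(k₂ * t₁) + -h₂ = -(h₂ + k₂ * t₁) := by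
    rw [neg_add]
    exact add_comm _ _
  have key : (!![1, k₁; k₂, 1] : Matrix (Fin 2) (Fin 2) R) * !![h₁, -t₁; t₂, -h₂] =
      !![h₁ + k₁ * t₂, 0; 0, -(h₂ + k₂ * t₁)] * !![1, k₁; k₂, 1] := by
    rw [Matrix.mul_fin_two, Matrix.mul_fin_two]
    simp only [one_mul, mul_one, mul_neg, neg_mul, zero_mul, add_zero, zero_add, mul_zero,
      e12, e21, e22]
  refine ⟨key, fun Winv hr _ => ?_⟩
  rw [key, Matrix.mul_assoc, hr, Matrix.mul_one]
end
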